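/- For all positive integers k and ℓ, if (a_n)_{n≥1} is a realizable sequence, then the sequence (a_{ℓ·n^k})_{n≥1} is also realizable. In other words, every monomial map n ↦ ℓ·n^k is a universally realizability-preserving time-change. -/

import Mathlib

/-- A sequence of non-negative integers is realizable if for every `n ≥ 1` the Möbius
sum `∑_{d ∣ n} μ(n/d)·a d` is non-negative and divisible by `n`. -/
def Realizable (x : ℕ → ℕ) : Prop :=
  ∀ n : ℕ, 1 ≤ n →
    0 ≤ (∑ d ∈ n.divisors, ArithmeticFunction.moebius (n / d) * (x d : ℤ)) ∧
    (n : ℤ) ∣ ∑ d ∈ n.divisors, ArithmeticFunction.moebius (n / d) * (x d : ℤ)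

/-!
A sequence `x` is realizable exactly when `x n = ∑_{d ∣ n} d * c d` for some `c : ℕ → ℕ` (`c d` is
the number of orbits of length `d`). If `h` is a strong divisibility sequence, then `m ∣ h n` if and
only if the rank of apparition of `m`, the least `d > 0` with `m ∣ h d`, divides `n`. Sorting the
terms `m * c m` of `a (h n)` by the rank of `m` therefore writes `a (h n)` as a sum over the
divisors of `n`. When moreover `m ∣ h m` for all `m > 0`, the rank of `m` divides `m`, so the terms
of rank `d` add up to a multiple of `d`.
-/

theorem sum_divisors_eq_iff_sum_moebius_div_mul_eq {R : Type*} [NonAssocRing R] {f g : ℕ → R} :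
    (∀ n > 0, ∑ d ∈ n.divisors, f d = g n) ↔
      ∀ n > 0, ∑ d ∈ n.divisors, (ArithmeticFunction.moebius (n / d) : R) * g d = f n := by
  simp only [ArithmeticFunction.sum_eq_iff_sum_mul_moebius_eq,
    Nat.sum_divisorsAntidiagonal' fun i j => (ArithmeticFunction.moebius i : R) * g j]

theorem realizable_iff_exists_sum_divisors_mul_eq {x : ℕ → ℕ} :
    Realizable x ↔ ∃ c : ℕ → ℕ, ∀ n > 0, ∑ d ∈ n.divisors, d * c d = x n := by
  have moebius_inversion (c : ℕ → ℕ) := sum_divisors_eq_iff_sum_moebius_div_mul_eq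
    (f := fun d => ((d * c d : ℕ) : ℤ)) (g := fun n => (x n : ℤ))
  constructor
  · intro hx
    have exists_orbit_count (n : ℕ) (hn : n > 0) : ∃ q : ℕ,
        ∑ d ∈ n.divisors, ArithmeticFunction.moebius (n / d) * (x d : ℤ) = (n * q : ℕ) := by
      obtain ⟨hnonneg, hdvd⟩ := hx n hn
      lift ∑ d ∈ n.divisors, ArithmeticFunction.moebius (n / d) * (x d : ℤ) to ℕ
        using hnonneg with s
      exact (Int.natCast_dvd_natCast.1 hdvd).imp fun q hq => congrArg _ hq
    choose! c hc using exists_orbit_count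
    exact ⟨c, fun n hn => mod_cast (moebius_inversion c).2 hc n hn⟩
  · rintro ⟨c, hc⟩ n hn
    have hsum : ∑ d ∈ n.divisors, ArithmeticFunction.moebius (n / d) * (x d : ℤ) = (n * c n : ℕ) :=
      (moebius_inversion c).1 (fun m hm => mod_cast hc m hm) n hn
    rw [hsum]
    exact ⟨Int.natCast_nonneg _, Int.natCast_dvd_natCast.2 (dvd_mul_right n (c n))⟩

/-- The rank of apparition of `m` in the sequence `h`: the least positive index `d` with `m ∣ h d`,
or `0` if there is none. -/
noncomputable def rankOfApparition (h : ℕ → ℕ) (m : ℕ) : ℕ :=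
  sInf {d | 0 < d ∧ m ∣ h d}

section StrongDivisibility

variable {h : ℕ → ℕ} (hh : Nat.IsStrongDvdSequence h)
include hh

theorem dvd_iff_rankOfApparition_dvd {m n : ℕ} (hn : 0 < n) :
    m ∣ h n ↔ rankOfApparition h m ∣ n := by
  constructor
  · intro hmn
    obtain ⟨hpos, hdvd⟩ : 0 < rankOfApparition h m ∧ m ∣ h (rankOfApparition h m) :=
      Nat.sInf_mem (s := {d | 0 < d ∧ m ∣ h d}) ⟨n, hn, hmn⟩
    have hle : rankOfApparition h m ≤ (rankOfApparition h m).gcd n :=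
      Nat.sInf_le ⟨Nat.gcd_pos_of_pos_left n hpos, hh _ n ▸ Nat.dvd_gcd hdvd hmn⟩
    exact Nat.gcd_eq_left_iff_dvd.1 (le_antisymm (Nat.gcd_le_left n hpos) hle)
  · intro hrank
    have hdvd : m ∣ h (rankOfApparition h m) :=
      (Nat.sInf_mem (Nat.nonempty_of_pos_sInf (Nat.pos_of_dvd_of_pos hrank hn))).2
    exact hdvd.trans (hh.isDvdSequence _ _ hrank)

theorem sum_divisors_map_eq_sum_rankOfApparition {M : Type*} [AddCommMonoid M] (f : ℕ → M) {n : ℕ}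
    (hn : 0 < n) (hhn : h n ≠ 0) :
    ∑ m ∈ (h n).divisors, f m =
      ∑ d ∈ n.divisors, ∑ m ∈ (h d).divisors with rankOfApparition h m = d, f m := by
  have rank_mem (m : ℕ) (hm : m ∈ (h n).divisors) : rankOfApparition h m ∈ n.divisors :=
    Nat.mem_divisors.2
      ⟨(dvd_iff_rankOfApparition_dvd hh hn).1 (Nat.dvd_of_mem_divisors hm), hn.ne'⟩
  rw [← Finset.sum_fiberwise_of_maps_to rank_mem]
  refine Finset.sum_congr rfl fun d hd => Finset.sum_congr ?_ fun _ _ => rfl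
  have hdvd : h d ∣ h n := hh.isDvdSequence _ _ (Nat.dvd_of_mem_divisors hd)
  ext m
  simp only [Finset.mem_filter, Nat.mem_divisors, and_congr_left_iff]
  rintro rfl
  have hm : m ∣ h (rankOfApparition h m) :=
    (dvd_iff_rankOfApparition_dvd hh (Nat.pos_of_mem_divisors hd)).2 dvd_rfl
  exact iff_of_true ⟨hm.trans hdvd, hhn⟩ ⟨hm, ne_zero_of_dvd_ne_zero hhn hdvd⟩

end StrongDivisibility

theorem Realizable.comp_isStrongDvdSequence {a h : ℕ → ℕ} (ha : Realizable a)
    (hh : Nat.IsStrongDvdSequence h) (hpos : ∀ n > 0, 0 < h n) (hdvd : ∀ n > 0, n ∣ h n) :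
    Realizable fun n => a (h n) := by
  obtain ⟨c, hc⟩ := realizable_iff_exists_sum_divisors_mul_eq.1 ha
  refine realizable_iff_exists_sum_divisors_mul_eq.2
    ⟨fun d => ∑ m ∈ (h d).divisors with rankOfApparition h m = d, m / d * c m, fun n hn => ?_⟩
  rw [← hc _ (hpos n hn), sum_divisors_map_eq_sum_rankOfApparition hh _ hn (hpos n hn).ne']
  refine Finset.sum_congr rfl fun d _ => ?_
  rw [Finset.mul_sum]
  refine Finset.sum_congr rfl fun m hm => ?_
  obtain ⟨hmd, rfl⟩ := Finset.mem_filter.1 hm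
  have hm_pos : 0 < m := Nat.pos_of_mem_divisors hmd
  have rank_dvd : rankOfApparition h m ∣ m :=
    (dvd_iff_rankOfApparition_dvd hh hm_pos).1 (hdvd m hm_pos)
  rw [← mul_assoc, Nat.mul_div_cancel' rank_dvd]

theorem isStrongDvdSequence_mul_pow (k l : ℕ) : Nat.IsStrongDvdSequence fun n => l * n ^ k := by
  intro m n
  rw [Nat.gcd_mul_left, Nat.pow_gcd_pow]

/-- Every monomial map `n ↦ ℓ·n^k` (with `k, ℓ ≥ 1`) is a universally
realizability-preserving time-change: if `(a n)` is realizable then so is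
`(a (ℓ·n^k))`. -/
theorem monomial_time_change_preserves_realizability (k l : ℕ) (hk : 1 ≤ k) (hl : 1 ≤ l)
    (a : ℕ → ℕ) (ha : Realizable a) :
    Realizable (fun n => a (l * n ^ k)) :=
  ha.comp_isStrongDvdSequence (isStrongDvdSequence_mul_pow k l)
    (fun _ hn => Nat.mul_pos hl (Nat.pow_pos hn))
    fun n _ => (dvd_pow_self n (Nat.one_le_iff_ne_zero.1 hk)).mul_left l
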